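/- arXiv:2601.21930 — 5 statements merged into one kernel-verified Lean document; each statement's English description precedes it below -/
import Mathlib

section
/- Let z∞ ∈ [0,1) and Γ, γ₊ ∈ ℝ. Then σ(ℓ,z) ≥ 0 for every ℓ ≥ 0 and z ∈ ℝ with ℓ² + z² < 1 if and only if γ₊ ≥ 0 and (2Γ ≥ γ₊ or z∞²·γ₊² ≤ 4·Γ·(γ₊ − Γ)). (This is the paper's Theorem 1: non-negativity of the map entropy production on the Bloch ball is equivalent to P-divisibility of the phase-covariant dynamics.) -/
/-!
Write `z∞ = 2c / (1 + c²)` with `|c| < 1`, that is `artanh c = (artanh z∞) / 2`. For `γ₊ ≥ 0` the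
P-divisibility condition then says `c² γ₊ ≤ (1 + c²) Γ`.

*Necessity.* On the axis `ℓ = 0` one has `σ = γ₊ (z∞ - z) (artanh z∞ - artanh z)`, so `γ₊ ≥ 0`.
Divide `σ` by `F r` and let `r → 1` at fixed height `z`: since `F r → ∞`, what survives is
`Γ (1 - z²) - γ₊ (z∞ - z) z ≥ 0`, and `z = c` gives the bound on `Γ`.

*Sufficiency.* As `σ` is linear in the rates and nondecreasing in `Γ`, it suffices to treat
`Γ = c²`, `γ₊ = 1 + c²`. With `f = F r` and `k = F z∞`, this critical `σ` is the quadratic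
`f z² - 2c (f + k) z + c² r² f + 2 c z∞ k`, considered on `z ≤ r` (with `c ≥ 0` by reflection).
If its vertex is at least `r`, its minimum is its value at `z = r`, a positive multiple of
`(r - z∞) (artanh r - artanh z∞)`. Otherwise its discriminant is nonpositive, because `F x`
increases and `(1 - x²) F x` decreases in `|x|`; both monotonicities are termwise in the power
series of `F`.
-/

/-- Inverse hyperbolic tangent: arctanh r = (1/2) log((1+r)/(1-r)). -/
noncomputable def artanh (r : ℝ) : ℝ := (1/2) * Real.log ((1 + r) / (1 - r))

/-- F(r) := arctanh(r)/r with the convention F(0) = 1. -/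
noncomputable def F (r : ℝ) : ℝ := if r = 0 then 1 else artanh r / r

/-- Fixed-point entropy production of the phase-covariant qubit dynamics,
extended to the whole Bloch ball, at the point with Bloch coordinates (ℓ, z). -/
noncomputable def sigmaFP (Γ γp zinf ℓ z : ℝ) : ℝ :=
  Γ * ℓ ^ 2 * F (Real.sqrt (ℓ ^ 2 + z ^ 2)) +
    γp * (zinf - z) * (artanh zinf - z * F (Real.sqrt (ℓ ^ 2 + z ^ 2)))

open Filter Topology

lemma artanh_eq_real_artanh {x : ℝ} (hx : |x| < 1) : artanh x = Real.artanh x :=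
  (Real.artanh_eq_half_log ⟨(abs_lt.1 hx).1.le, (abs_lt.1 hx).2.le⟩).symm

lemma artanh_neg (x : ℝ) : artanh (-x) = -artanh x := by
  have hinv : (1 + -x) / (1 - -x) = ((1 + x) / (1 - x))⁻¹ := by
    rw [inv_div, sub_neg_eq_add, ← sub_eq_add_neg]
  rw [artanh, artanh, hinv, Real.log_inv, mul_neg]

lemma mul_F (x : ℝ) : x * F x = artanh x := by
  rcases eq_or_ne x 0 with rfl | hx
  · simp [artanh]
  · rw [F, if_neg hx, mul_div_cancel₀ _ hx]

lemma F_neg (x : ℝ) : F (-x) = F x := by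
  simp only [F, neg_eq_zero, artanh_neg, neg_div_neg_eq]

lemma F_abs (x : ℝ) : F |x| = F x := by
  rcases abs_choice x with hx | hx <;> simp only [hx, F_neg]

lemma hasSum_F {x : ℝ} (hx : |x| < 1) :
    HasSum (fun k : ℕ ↦ x ^ (2 * k) / (2 * k + 1)) (F x) := by
  rcases eq_or_ne x 0 with rfl | hx0
  · convert hasSum_single (f := fun k : ℕ ↦ (0 : ℝ) ^ (2 * k) / (2 * k + 1)) 0 ?_ using 1
    · simp [F]
    · intro k hk
      simp [hk]
  · obtain ⟨hneg, hpos⟩ := abs_lt.1 hx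
    have hF : F x = (2 * x)⁻¹ * (Real.log (1 + x) - Real.log (1 - x)) := by
      rw [F, if_neg hx0, artanh, Real.log_div (by linarith) (by linarith)]
      ring
    rw [hF]
    refine ((Real.hasSum_log_sub_log_of_abs_lt_one hx).mul_left (2 * x)⁻¹).congr_fun fun k ↦ ?_
    field_simp
    ring

lemma hasSum_one_sub_one_sub_sq_mul_F {x : ℝ} (hx : |x| < 1) :
    HasSum (fun k : ℕ ↦ 2 / ((2 * k + 1) * (2 * k + 3)) * x ^ (2 * (k + 1)))
      (1 - (1 - x ^ 2) * F x) := by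
  have htail : HasSum (fun k : ℕ ↦ x ^ (2 * (k + 1)) / (2 * ↑(k + 1) + 1)) (F x - 1) := by
    simpa using (hasSum_nat_add_iff' 1).2 (hasSum_F hx)
  have hvalue : 1 - (1 - x ^ 2) * F x = x ^ 2 * F x - (F x - 1) := by ring
  rw [hvalue]
  refine (((hasSum_F hx).mul_left (x ^ 2)).sub htail).congr_fun fun k ↦ ?_
  push_cast
  field_simp
  ring

lemma F_le_F_of_abs_le {x y : ℝ} (hxy : |x| ≤ |y|) (hy : |y| < 1) : F x ≤ F y := by
  refine hasSum_le (fun k ↦ ?_) (hasSum_F (hxy.trans_lt hy)) (hasSum_F hy)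
  rw [pow_mul, pow_mul]
  have hsq : x ^ 2 ≤ y ^ 2 := sq_le_sq.2 hxy
  gcongr

lemma one_sub_sq_mul_F_le_of_abs_le {x y : ℝ} (hxy : |x| ≤ |y|) (hy : |y| < 1) :
    (1 - y ^ 2) * F y ≤ (1 - x ^ 2) * F x := by
  refine (sub_le_sub_iff_left 1).1 (hasSum_le (fun k ↦ ?_)
    (hasSum_one_sub_one_sub_sq_mul_F (hxy.trans_lt hy)) (hasSum_one_sub_one_sub_sq_mul_F hy))
  rw [pow_mul, pow_mul]
  have hsq : x ^ 2 ≤ y ^ 2 := sq_le_sq.2 hxy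
  gcongr

lemma one_le_F {x : ℝ} (hx : |x| < 1) : 1 ≤ F x := by
  simpa [F] using F_le_F_of_abs_le (x := 0) (by simp) hx

lemma tendsto_F_nhdsLT_one : Tendsto F (𝓝[<] 1) atTop := by
  refine tendsto_atTop.2 fun b ↦ ?_
  filter_upwards [Ioo_mem_nhdsLT (max_lt (Real.tanh_lt_one b) one_pos)] with x ⟨hbx, hx1⟩
  obtain ⟨htanh, hx0⟩ := max_lt_iff.1 hbx
  have hx : |x| < 1 := abs_lt.2 ⟨by linarith, hx1⟩
  calc b = Real.artanh (Real.tanh b) := (Real.artanh_tanh b).symm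
    _ ≤ Real.artanh x := Real.artanh_le_artanh (Real.neg_one_lt_tanh b) hx1 htanh.le
    _ = x * F x := by rw [mul_F, artanh_eq_real_artanh hx]
    _ ≤ F x := mul_le_of_le_one_left (zero_le_one.trans (one_le_F hx)) hx1.le

lemma sub_mul_artanh_sub_pos {x y : ℝ} (hx : |x| < 1) (hy : |y| < 1) (hxy : x < y) :
    0 < (x - y) * (artanh x - artanh y) := by
  rw [artanh_eq_real_artanh hx, artanh_eq_real_artanh hy]
  exact mul_pos_of_neg_of_neg (sub_neg.2 hxy)
    (sub_neg.2 (Real.artanh_lt_artanh (abs_lt.1 hx).1 (abs_lt.1 hy).2 hxy))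

lemma sub_mul_artanh_sub_nonneg {x y : ℝ} (hx : |x| < 1) (hy : |y| < 1) :
    0 ≤ (x - y) * (artanh x - artanh y) := by
  rcases lt_trichotomy x y with hxy | rfl | hyx
  · exact (sub_mul_artanh_sub_pos hx hy hxy).le
  · simp
  · rw [← neg_mul_neg, neg_sub, neg_sub]
    exact (sub_mul_artanh_sub_pos hy hx hyx).le

lemma sigmaFP_neg (Γ γp w ℓ z : ℝ) : sigmaFP Γ γp (-w) ℓ (-z) = sigmaFP Γ γp w ℓ z := by
  simp only [sigmaFP, artanh_neg, neg_sq]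
  ring

lemma sigmaFP_zero_left (Γ γp w z : ℝ) :
    sigmaFP Γ γp w 0 z = γp * ((w - z) * (artanh w - artanh z)) := by
  have hnorm : √((0 : ℝ) ^ 2 + z ^ 2) = |z| := by
    rw [zero_pow two_ne_zero, zero_add, Real.sqrt_sq_eq_abs]
  rw [sigmaFP, hnorm, F_abs, mul_F]
  ring

lemma longitudinal_rate_nonneg {Γ γp w : ℝ} (hw : |w| < 1)
    (h : ∀ z : ℝ, z ^ 2 < 1 → 0 ≤ sigmaFP Γ γp w 0 z) : 0 ≤ γp := by
  obtain ⟨z, hwz, hz1⟩ := exists_between (abs_lt.1 hw).2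
  have hz : |z| < 1 := abs_lt.2 ⟨(abs_lt.1 hw).1.trans hwz, hz1⟩
  have hσ := h z ((sq_lt_one_iff_abs_lt_one z).2 hz)
  rw [sigmaFP_zero_left] at hσ
  exact nonneg_of_mul_nonneg_left hσ (sub_mul_artanh_sub_pos hw hz hwz)

-- Up to a factor, `Γ (1 - z²) - γp (w - z) z` is the inward radial speed of the dynamics on the
-- Bloch sphere at height `z`.
lemma sphere_inward_of_sigmaFP_nonneg {Γ γp w z : ℝ} (hz : |z| < 1)
    (h : ∀ ℓ : ℝ, 0 ≤ ℓ → ℓ ^ 2 + z ^ 2 < 1 → 0 ≤ sigmaFP Γ γp w ℓ z) :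
    γp * (w - z) * z ≤ Γ * (1 - z ^ 2) := by
  have hlim : Tendsto
      (fun r : ℝ ↦ Γ * (r ^ 2 - z ^ 2) - γp * (w - z) * z + γp * (w - z) * artanh w / F r)
      (𝓝[<] 1) (𝓝 (Γ * (1 ^ 2 - z ^ 2) - γp * (w - z) * z + 0)) := by
    refine Tendsto.add (tendsto_nhdsWithin_of_tendsto_nhds ?_)
      (tendsto_F_nhdsLT_one.const_div_atTop _)
    exact Continuous.tendsto (by fun_prop) 1
  have hnonneg : ∀ᶠ r : ℝ in 𝓝[<] 1,
      0 ≤ Γ * (r ^ 2 - z ^ 2) - γp * (w - z) * z + γp * (w - z) * artanh w / F r := by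
    filter_upwards [Ioo_mem_nhdsLT hz] with r ⟨hzr, hr1⟩
    have hr0 : 0 < r := (abs_nonneg z).trans_lt hzr
    have hF : 0 < F r := zero_lt_one.trans_le (one_le_F (by rwa [abs_of_pos hr0]))
    have hℓ : √(r ^ 2 - z ^ 2) ^ 2 = r ^ 2 - z ^ 2 :=
      Real.sq_sqrt (sub_nonneg.2 (sq_le_sq.2 (by rw [abs_of_pos hr0]; exact hzr.le)))
    have hσ := h √(r ^ 2 - z ^ 2) (Real.sqrt_nonneg _)
      (by rw [hℓ, sub_add_cancel]; exact pow_lt_one₀ hr0.le hr1 two_ne_zero)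
    rw [sigmaFP, hℓ, sub_add_cancel, Real.sqrt_sq hr0.le] at hσ
    refine (div_nonneg hσ hF.le).trans_eq ?_
    field_simp
    ring
  linarith [ge_of_tendsto hlim hnonneg]

-- The witness is `tanh (artanh w / 2)`.
lemma exists_mul_one_add_sq_eq_two_mul {w : ℝ} (hw : |w| < 1) :
    ∃ c : ℝ, |c| < 1 ∧ w * (1 + c ^ 2) = 2 * c := by
  have hs : √(1 - w ^ 2) ^ 2 = 1 - w ^ 2 :=
    Real.sq_sqrt (sub_nonneg.2 ((sq_lt_one_iff_abs_lt_one w).2 hw).le)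
  have hs0 : 0 ≤ √(1 - w ^ 2) := Real.sqrt_nonneg _
  refine ⟨w / (1 + √(1 - w ^ 2)), ?_, ?_⟩
  · rw [abs_div, abs_of_pos (by positivity : 0 < 1 + √(1 - w ^ 2)), div_lt_one (by positivity)]
    linarith
  · field_simp
    linear_combination w * hs

section HalfRapidity

variable {c w : ℝ}

lemma rate_condition_iff {Γ γp : ℝ} (hcw : w * (1 + c ^ 2) = 2 * c) (hc : |c| < 1)
    (hγ : 0 ≤ γp) :
    (γp ≤ 2 * Γ ∨ w ^ 2 * γp ^ 2 ≤ 4 * Γ * (γp - Γ)) ↔ γp * c ^ 2 ≤ Γ * (1 + c ^ 2) := by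
  have hc2 : c ^ 2 ≤ 1 := ((sq_lt_one_iff_abs_lt_one c).2 hc).le
  have hγc : γp * c ^ 2 ≤ γp := mul_le_of_le_one_right hγ hc2
  have hfactor : (1 + c ^ 2) ^ 2 * (4 * Γ * (γp - Γ) - w ^ 2 * γp ^ 2)
      = 4 * ((Γ * (1 + c ^ 2) - γp * c ^ 2) * (γp - Γ * (1 + c ^ 2))) := by
    linear_combination (-γp ^ 2 * (w * (1 + c ^ 2) + 2 * c)) * hcw
  constructor
  · rintro (hΓ | hquad)
    · linear_combination (1 + c ^ 2) / 2 * hΓ + 1 / 2 * hγc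
    · by_contra! hlt
      have hprod : 0 ≤ (1 + c ^ 2) ^ 2 * (4 * Γ * (γp - Γ) - w ^ 2 * γp ^ 2) :=
        mul_nonneg (sq_nonneg _) (sub_nonneg.2 hquad)
      have hneg : (Γ * (1 + c ^ 2) - γp * c ^ 2) * (γp - Γ * (1 + c ^ 2)) < 0 :=
        mul_neg_of_neg_of_pos (by linarith) (by linarith)
      linarith
  · intro hΓ
    refine or_iff_not_imp_left.2 fun hlt ↦ ?_
    have hΓ0 : 0 ≤ Γ := nonneg_of_mul_nonneg_left
      ((mul_nonneg hγ (sq_nonneg c)).trans hΓ) (by positivity)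
    have hupper : Γ * (1 + c ^ 2) ≤ γp :=
      calc Γ * (1 + c ^ 2) ≤ Γ * 2 := mul_le_mul_of_nonneg_left (by linarith) hΓ0
        _ ≤ γp := by linarith
    have hprod : 0 ≤ (1 + c ^ 2) ^ 2 * (4 * Γ * (γp - Γ) - w ^ 2 * γp ^ 2) := by
      rw [hfactor]
      exact mul_nonneg zero_le_four (mul_nonneg (sub_nonneg.2 hΓ) (sub_nonneg.2 hupper))
    exact sub_nonneg.1 (nonneg_of_mul_nonneg_right hprod (by positivity))

lemma transverse_rate_lower_bound {Γ γp : ℝ} (hcw : w * (1 + c ^ 2) = 2 * c) (hc : |c| < 1)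
    (h : γp * (w - c) * c ≤ Γ * (1 - c ^ 2)) : γp * c ^ 2 ≤ Γ * (1 + c ^ 2) := by
  have hpos : 0 < 1 - c ^ 2 := sub_pos.2 ((sq_lt_one_iff_abs_lt_one c).2 hc)
  refine le_of_mul_le_mul_right ?_ hpos
  calc γp * c ^ 2 * (1 - c ^ 2) = γp * (w - c) * c * (1 + c ^ 2) := by
        linear_combination (-γp * c) * hcw
    _ ≤ Γ * (1 - c ^ 2) * (1 + c ^ 2) := mul_le_mul_of_nonneg_right h (by positivity)
    _ = Γ * (1 + c ^ 2) * (1 - c ^ 2) := by ring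

-- Here `1 - c * w = √(1 - w²)`. For `f = F r` and `k = F w`, the hypotheses `hkf` and `hfk` are the
-- two monotonicities of `F`, and `hvertex` puts the vertex of the critical quadratic below `r`.
lemma critical_discriminant_nonpos {r f k : ℝ} (hcw : w * (1 + c ^ 2) = 2 * c) (hc0 : 0 ≤ c)
    (hc1 : c ≤ 1) (hwr : w ≤ r) (hk0 : 0 ≤ k) (hkf : k ≤ f)
    (hfk : (1 - r ^ 2) * f ≤ (1 - w ^ 2) * k) (hvertex : c * (f + k) ≤ r * f) :
    (1 - r ^ 2) * f ^ 2 - 2 * (1 - c * w) * (f * k) + k ^ 2 ≤ 0 := by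
  have hf0 : 0 ≤ f := hk0.trans hkf
  have hw0 : 0 ≤ w :=
    nonneg_of_mul_nonneg_left (hcw ▸ by positivity) (by positivity : 0 < 1 + c ^ 2)
  have hw1 : w ≤ 1 := by nlinarith [sq_nonneg (1 - c)]
  have hcw0 : 0 ≤ c * w := mul_nonneg hc0 hw0
  have hcw1 : c * w ≤ 1 := mul_le_one₀ hc1 hw0 hw1
  have hs : (1 - c * w) ^ 2 = 1 - w ^ 2 := by linear_combination w * hcw
  rcases le_total k ((1 - c * w) * f) with hks | hks
  · have hfirst : (1 - r ^ 2) * f ^ 2 ≤ (1 - c * w) ^ 2 * (f * k) := by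
      rw [hs]
      linear_combination f * hfk
    have hlast : k ^ 2 ≤ (1 - c * w) * (f * k) := by linear_combination k * hks
    have hslack : 0 ≤ (1 - c * w) * (c * w) * (f * k) :=
      mul_nonneg (mul_nonneg (by linarith) hcw0) (mul_nonneg hf0 hk0)
    linear_combination hfirst + hlast + hslack
  · have hgap : c * (k - (1 - c * w) * f) ≤ (r - w) * f := by
      linear_combination hvertex + f * hcw
    have hsq : (k - (1 - c * w) * f) ^ 2 ≤ (r ^ 2 - w ^ 2) * f ^ 2 :=
      calc (k - (1 - c * w) * f) ^ 2
          ≤ (c * w * f) * (k - (1 - c * w) * f) := by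
            rw [sq]
            exact mul_le_mul_of_nonneg_right (by linarith) (by linarith)
        _ = w * f * (c * (k - (1 - c * w) * f)) := by ring
        _ ≤ w * f * ((r - w) * f) := mul_le_mul_of_nonneg_left hgap (by positivity)
        _ ≤ (r + w) * f * ((r - w) * f) := by
            have : 0 ≤ (r - w) * f := mul_nonneg (sub_nonneg.2 hwr) hf0
            gcongr
            linarith
        _ = (r ^ 2 - w ^ 2) * f ^ 2 := by ring
    linear_combination hsq - f ^ 2 * hs

/-- The entropy production at the critical rates `Γ = c²`, `γ₊ = 1 + c²`, as a quadratic in the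
height `z` on the sphere of radius `r`; see `sigmaFP_critical_eq`. -/
noncomputable def criticalQuadratic (c w r z : ℝ) : ℝ :=
  F r * z ^ 2 - 2 * c * (F r + F w) * z + c ^ 2 * r ^ 2 * F r + 2 * c * w * F w

lemma sigmaFP_critical_eq (hcw : w * (1 + c ^ 2) = 2 * c) (ℓ z : ℝ) :
    sigmaFP (c ^ 2) (1 + c ^ 2) w ℓ z = criticalQuadratic c w √(ℓ ^ 2 + z ^ 2) z := by
  rw [criticalQuadratic, Real.sq_sqrt (by positivity), sigmaFP, ← mul_F w]
  linear_combination (w * F w - z * (F √(ℓ ^ 2 + z ^ 2) + F w)) * hcw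

lemma criticalQuadratic_self_nonneg {r : ℝ} (hcw : w * (1 + c ^ 2) = 2 * c)
    (hw : |w| < 1) (hr : |r| < 1) : 0 ≤ criticalQuadratic c w r r :=
  calc 0 ≤ (1 + c ^ 2) * ((r - w) * (artanh r - artanh w)) :=
        mul_nonneg (by positivity) (sub_mul_artanh_sub_nonneg hr hw)
    _ = criticalQuadratic c w r r := by
        rw [criticalQuadratic, ← mul_F r, ← mul_F w]
        linear_combination (-(F r + F w) * r + w * F w) * hcw

lemma criticalQuadratic_self_le {r z : ℝ} (hf : 0 ≤ F r) (hzr : z ≤ r)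
    (hvertex : r * F r ≤ c * (F r + F w)) :
    criticalQuadratic c w r r ≤ criticalQuadratic c w r z := by
  have hslope : F r * (z + r) ≤ 2 * (c * (F r + F w)) := by
    linear_combination 2 * hvertex + F r * hzr
  have hdecr : 0 ≤ (r - z) * (2 * (c * (F r + F w)) - F r * (z + r)) :=
    mul_nonneg (sub_nonneg.2 hzr) (sub_nonneg.2 hslope)
  simp only [criticalQuadratic]
  linear_combination hdecr

lemma criticalQuadratic_nonneg_of_discriminant {r : ℝ} (hcw : w * (1 + c ^ 2) = 2 * c)
    (hf : 0 < F r)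
    (hdisc : (1 - r ^ 2) * F r ^ 2 - 2 * (1 - c * w) * (F r * F w) + F w ^ 2 ≤ 0) (z : ℝ) :
    0 ≤ criticalQuadratic c w r z := by
  have hsquare : F r * criticalQuadratic c w r z = (F r * z - c * (F r + F w)) ^ 2
      - c ^ 2 * ((1 - r ^ 2) * F r ^ 2 - 2 * (1 - c * w) * (F r * F w) + F w ^ 2) := by
    rw [criticalQuadratic]
    linear_combination (2 * c * F r * F w) * hcw
  refine nonneg_of_mul_nonneg_right (hsquare ▸ sub_nonneg.2 ?_) hf
  exact (mul_nonpos_of_nonneg_of_nonpos (sq_nonneg c) hdisc).trans (sq_nonneg _)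

lemma criticalQuadratic_nonneg {r z : ℝ} (hcw : w * (1 + c ^ 2) = 2 * c) (hc0 : 0 ≤ c)
    (hc1 : c < 1) (hr0 : 0 ≤ r) (hr1 : r < 1) (hzr : z ≤ r) :
    0 ≤ criticalQuadratic c w r z := by
  have hw0 : 0 ≤ w :=
    nonneg_of_mul_nonneg_left (hcw ▸ by positivity) (by positivity : 0 < 1 + c ^ 2)
  have hw1 : w < 1 := by nlinarith [pow_pos (sub_pos.2 hc1) 2]
  have hr : |r| < 1 := by rwa [abs_of_nonneg hr0]
  have hw : |w| < 1 := by rwa [abs_of_nonneg hw0]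
  have hf : 0 < F r := zero_lt_one.trans_le (one_le_F hr)
  have hk : 0 < F w := zero_lt_one.trans_le (one_le_F hw)
  rcases le_total (r * F r) (c * (F r + F w)) with hvertex | hvertex
  · exact (criticalQuadratic_self_nonneg hcw hw hr).trans
      (criticalQuadratic_self_le hf.le hzr hvertex)
  · have hwr : w ≤ r := by
      by_contra! hrw
      have hFF : F r ≤ F w :=
        F_le_F_of_abs_le (by simpa only [abs_of_nonneg hr0, abs_of_nonneg hw0] using hrw.le) hw
      have hcr : 2 * c ≤ r :=
        le_of_mul_le_mul_right (by linear_combination hvertex + c * hFF) hf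
      have hw2c : w ≤ 2 * c :=
        hcw ▸ le_mul_of_one_le_right hw0 (le_add_of_nonneg_right (sq_nonneg c))
      linarith
    have habs : |w| ≤ |r| := by rwa [abs_of_nonneg hr0, abs_of_nonneg hw0]
    exact criticalQuadratic_nonneg_of_discriminant hcw hf
      (critical_discriminant_nonpos hcw hc0 hc1.le hwr hk.le (F_le_F_of_abs_le habs hr)
        (one_sub_sq_mul_F_le_of_abs_le habs hr) hvertex) z

lemma sigmaFP_critical_nonneg {ℓ z : ℝ} (hcw : w * (1 + c ^ 2) = 2 * c) (hc : |c| < 1)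
    (hball : ℓ ^ 2 + z ^ 2 < 1) : 0 ≤ sigmaFP (c ^ 2) (1 + c ^ 2) w ℓ z := by
  wlog hc0 : 0 ≤ c generalizing c w z
  · have hreflected := this (c := -c) (w := -w) (z := -z) (by linear_combination -hcw)
      (by rwa [abs_neg]) (by rwa [neg_sq]) (by linarith)
    rwa [sigmaFP_neg, neg_sq] at hreflected
  have hr1 : √(ℓ ^ 2 + z ^ 2) < 1 := (Real.sqrt_lt' one_pos).2 (by rwa [one_pow])
  have hzr : z ≤ √(ℓ ^ 2 + z ^ 2) := Real.le_sqrt_of_sq_le (le_add_of_nonneg_left (sq_nonneg ℓ))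
  rw [sigmaFP_critical_eq hcw]
  exact criticalQuadratic_nonneg hcw hc0 (abs_lt.1 hc).2 (Real.sqrt_nonneg _) hr1 hzr

lemma sigmaFP_nonneg {Γ γp ℓ z : ℝ} (hcw : w * (1 + c ^ 2) = 2 * c) (hc : |c| < 1)
    (hγ : 0 ≤ γp) (hΓ : γp * c ^ 2 ≤ Γ * (1 + c ^ 2)) (hball : ℓ ^ 2 + z ^ 2 < 1) :
    0 ≤ sigmaFP Γ γp w ℓ z := by
  have hdecomp : (1 + c ^ 2) * sigmaFP Γ γp w ℓ z = γp * sigmaFP (c ^ 2) (1 + c ^ 2) w ℓ z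
      + (Γ * (1 + c ^ 2) - γp * c ^ 2) * (ℓ ^ 2 * F √(ℓ ^ 2 + z ^ 2)) := by
    simp only [sigmaFP]
    ring
  have hF : 0 ≤ F √(ℓ ^ 2 + z ^ 2) := by
    refine zero_le_one.trans (one_le_F ?_)
    rwa [abs_of_nonneg (Real.sqrt_nonneg _), Real.sqrt_lt' one_pos, one_pow]
  refine nonneg_of_mul_nonneg_right (hdecomp ▸ add_nonneg ?_ ?_) (by positivity : 0 < 1 + c ^ 2)
  · exact mul_nonneg hγ (sigmaFP_critical_nonneg hcw hc hball)
  · exact mul_nonneg (sub_nonneg.2 hΓ) (mul_nonneg (sq_nonneg ℓ) hF)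

end HalfRapidity

theorem map_entropy_nonneg_iff_P_divisible_general
    (zinf Γ γp : ℝ) (hz : |zinf| < 1) :
    (∀ ℓ z : ℝ, 0 ≤ ℓ → ℓ ^ 2 + z ^ 2 < 1 → 0 ≤ sigmaFP Γ γp zinf ℓ z) ↔
      (0 ≤ γp ∧ (γp ≤ 2 * Γ ∨ zinf ^ 2 * γp ^ 2 ≤ 4 * Γ * (γp - Γ))) := by
  obtain ⟨c, hc, hcw⟩ := exists_mul_one_add_sq_eq_two_mul hz
  constructor
  · intro h
    have hγ : 0 ≤ γp := longitudinal_rate_nonneg hz fun z hz' ↦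
      h 0 z le_rfl (by simpa using hz')
    have hsphere : γp * (zinf - c) * c ≤ Γ * (1 - c ^ 2) :=
      sphere_inward_of_sigmaFP_nonneg hc fun ℓ hℓ ↦ h ℓ c hℓ
    exact ⟨hγ, (rate_condition_iff hcw hc hγ).2 (transverse_rate_lower_bound hcw hc hsphere)⟩
  · rintro ⟨hγ, hdiv⟩ ℓ z - hball
    exact sigmaFP_nonneg hcw hc hγ ((rate_condition_iff hcw hc hγ).1 hdiv) hball

/-- **Theorem 1 of the paper.** Non-negativity of the map entropy production on the
Bloch ball is equivalent to P-divisibility of the phase-covariant dynamics. -/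
theorem map_entropy_nonneg_iff_P_divisible
    (zinf Γ γp : ℝ) (hz0 : 0 ≤ zinf) (hz1 : zinf < 1) :
    (∀ ℓ z : ℝ, 0 ≤ ℓ → ℓ ^ 2 + z ^ 2 < 1 → 0 ≤ sigmaFP Γ γp zinf ℓ z) ↔
      (0 ≤ γp ∧ (γp ≤ 2 * Γ ∨ zinf ^ 2 * γp ^ 2 ≤ 4 * Γ * (γp - Γ))) :=
  map_entropy_nonneg_iff_P_divisible_general zinf Γ γp (abs_lt.2 ⟨by linarith, hz1⟩)
end

section
/- Let Γ ≥ 0, γ₊ > 0 and z∞ > 0. For every z with 0 ≤ z < z∞, the quadratic P(z) := −Γ·z∞² + γ₊·z∞·z + (Γ − γ₊)·z² satisfies P(z) ≥ 0 if and only if 2Γ < γ₊ and z ≥ z∞·Γ/(γ₊ − Γ). (Since ℓ̂(z)² + z² − z∞² = P(z)/Γ when Γ > 0, this characterizes exactly when the turning radius r̂(z) := √(ℓ̂(z)² + z²), with ℓ̂(z) := √(γ₊·(z∞ − z)·z/Γ), satisfies r̂(z) ≥ z∞.) -/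
/-!
Since `z = z∞` is a root, `P(z) = (z∞ - z) * ((γ₊ - Γ) * z - Γ * z∞)`, so below `z∞` the sign of
`P` is that of an affine cofactor. The cofactor takes the values `-Γ * z∞` at `0` and
`(γ₊ - 2 * Γ) * z∞` at `z∞`; if `0 < γ₊ ≤ 2 * Γ`, it is therefore negative on all of `[0, z∞)`.
-/

theorem critical_quadratic_eq_mul {R : Type*} [CommRing R] (Γ γp zinf z : R) :
    -Γ * zinf ^ 2 + γp * zinf * z + (Γ - γp) * z ^ 2 =
      (zinf - z) * ((γp - Γ) * z - Γ * zinf) := by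
  ring

theorem critical_quadratic_neg {R : Type*} [CommRing R] [PartialOrder R] [IsStrictOrderedRing R]
    {Γ γp zinf z : R} (hΓ : 0 < Γ) (hγ : γp ≤ 2 * Γ) (hz0 : 0 ≤ z) (hz : z < zinf) :
    -Γ * zinf ^ 2 + γp * zinf * z + (Γ - γp) * z ^ 2 < 0 := by
  have hsub : γp - Γ ≤ Γ := sub_le_iff_le_add.mpr (hγ.trans_eq (two_mul Γ))
  have hcofactor : (γp - Γ) * z < Γ * zinf :=
    calc
      (γp - Γ) * z ≤ Γ * z := mul_le_mul_of_nonneg_right hsub hz0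
      _ < Γ * zinf := mul_lt_mul_of_pos_left hz hΓ
  rw [critical_quadratic_eq_mul]
  exact mul_neg_of_pos_of_neg (sub_pos.mpr hz) (sub_neg.mpr hcofactor)

section Field

variable {K : Type*} [Field K] [LinearOrder K] [IsStrictOrderedRing K] {Γ γp zinf z : K}

theorem critical_quadratic_nonneg_iff_div_le (hΓγ : Γ < γp) (hz : z < zinf) :
    0 ≤ -Γ * zinf ^ 2 + γp * zinf * z + (Γ - γp) * z ^ 2 ↔ zinf * Γ / (γp - Γ) ≤ z := by
  rw [critical_quadratic_eq_mul, mul_nonneg_iff_of_pos_left (sub_pos.mpr hz), sub_nonneg,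
    div_le_iff₀' (sub_pos.mpr hΓγ), mul_comm Γ]

theorem critical_quadratic_nonneg_iff_general (hγ : 0 < γp) (hz0 : 0 ≤ z) (hz : z < zinf) :
    0 ≤ -Γ * zinf ^ 2 + γp * zinf * z + (Γ - γp) * z ^ 2 ↔
      (2 * Γ < γp ∧ zinf * Γ / (γp - Γ) ≤ z) := by
  rcases lt_or_ge (2 * Γ) γp with hlt | hge
  · have hΓγ : Γ < γp := by linarith
    rw [critical_quadratic_nonneg_iff_div_le hΓγ hz, and_iff_right hlt]
  · have hΓ : 0 < Γ := by linarith
    exact iff_of_false (critical_quadratic_neg hΓ hge hz0 hz).not_ge fun h => hge.not_gt h.1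

end Field

/-- Characterization of when the turning radius reaches z∞: for 0 ≤ z < z∞ the
quadratic P(z) = −Γz∞² + γ₊z∞z + (Γ − γ₊)z² is nonnegative iff 2Γ < γ₊ and
z ≥ z∞Γ/(γ₊ − Γ). -/
theorem critical_quadratic_nonneg_iff
    (Γ γp zinf : ℝ) (hΓ : 0 ≤ Γ) (hγ : 0 < γp) (hzi : 0 < zinf)
    (z : ℝ) (hz0 : 0 ≤ z) (hz : z < zinf) :
    0 ≤ -Γ * zinf ^ 2 + γp * zinf * z + (Γ - γp) * z ^ 2 ↔
      (2 * Γ < γp ∧ zinf * Γ / (γp - Γ) ≤ z) :=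
  critical_quadratic_nonneg_iff_general hγ hz0 hz
end

section
/- The function r ↦ (r − 1/r)·arctanh(r) (equivalently r ↦ (arctanh(r)/r)·(r² − 1)) is strictly increasing on the interval (0,1). -/
section

variable {r : ℝ}

lemma self_le_artanh (h₀ : 0 ≤ r) (h₁ : r < 1) : r ≤ artanh r := by
  simpa [artanh] using Real.sum_range_le_log_div h₀ h₁ 1

lemma self_lt_one_add_sq_mul_artanh (h₀ : 0 < r) (h₁ : r < 1) :
    r < (1 + r ^ 2) * artanh r := by
  have h_le : r ≤ artanh r := self_le_artanh h₀.le h₁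
  calc
    r ≤ artanh r := h_le
    _ < (1 + r ^ 2) * artanh r :=
      lt_mul_of_one_lt_left (h₀.trans_le h_le) (lt_add_of_pos_right 1 (pow_pos h₀ 2))

lemma hasDerivAt_artanh (h₀ : -1 < r) (h₁ : r < 1) :
    HasDerivAt artanh (1 / (1 - r ^ 2)) r := by
  unfold artanh
  simpa using
    Real.hasDerivAt_half_log_one_add_div_one_sub_sub_sum_range 0 h₀ h₁

lemma hasDerivAt_sub_inv_mul_artanh (h₀ : -1 < r) (h₁ : r < 1) (hr : r ≠ 0) :
    HasDerivAt (fun x : ℝ => (x - 1 / x) * artanh x)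
      (((1 + r ^ 2) * artanh r - r) / r ^ 2) r := by
  have h_sub_inv : HasDerivAt (fun x : ℝ => x - 1 / x) (1 + 1 / r ^ 2) r := by
    simpa [neg_div] using (hasDerivAt_id' r).fun_sub (hasDerivAt_inv hr)
  have h_ne : 1 - r ^ 2 ≠ 0 := by nlinarith
  refine (h_sub_inv.fun_mul (hasDerivAt_artanh h₀ h₁)).congr_deriv ?_
  field_simp
  ring

end

/-- r ↦ (r − 1/r)·arctanh r is strictly increasing on (0,1). -/
theorem strictMonoOn_sub_inv_mul_artanh :
    StrictMonoOn (fun r : ℝ => (r - 1 / r) * artanh r) (Set.Ioo 0 1) := by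
  have h_deriv (r : ℝ) (hr : r ∈ Set.Ioo (0 : ℝ) 1) :=
    hasDerivAt_sub_inv_mul_artanh (neg_one_lt_zero.trans hr.1) hr.2 hr.1.ne'
  refine strictMonoOn_of_deriv_pos (convex_Ioo 0 1) (HasDerivAt.continuousOn h_deriv)
    fun r hr => ?_
  rw [interior_Ioo] at hr
  rw [(h_deriv r hr).deriv]
  exact div_pos (sub_pos.2 (self_lt_one_add_sq_mul_artanh hr.1 hr.2)) (pow_pos hr.1 2)
end

section
/- Let z∞ ∈ (0,1), α := 1 − √(1 − z∞²), and fix z ∈ [0, z∞]. Then the function ℓ ↦ (α/2)·(ℓ²/r)·arctanh(r) + (z∞ − z)·(arctanh(z∞) − (z/r)·arctanh(r)), where r := √(ℓ² + z²), is strictly increasing on the interval (0, √(1 − z²)). -/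
lemma hasSum_artanh {r : ℝ} (hr : |r| < 1) :
    HasSum (fun n : ℕ => r ^ (2 * n + 1) / (2 * n + 1)) (artanh r) := by
  obtain ⟨hneg, hpos⟩ := abs_lt.1 hr
  rw [artanh, Real.log_div (by linarith) (by linarith)]
  refine ((Real.hasSum_log_sub_log_of_abs_lt_one hr).mul_left (1 / 2)).congr_fun fun n => ?_
  ring

lemma hasSum_artanh_div_self {r : ℝ} (h0 : r ≠ 0) (hr : |r| < 1) :
    HasSum (fun n : ℕ => r ^ (2 * n) / (2 * n + 1)) (artanh r / r) := by
  refine ((hasSum_artanh hr).div_const r).congr_fun fun n => ?_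
  field_simp
  ring

lemma hasSum_mul_sq_sub_mul_artanh_div_self (a b : ℝ) {r : ℝ} (h0 : r ≠ 0) (hr : |r| < 1) :
    HasSum (fun n : ℕ => (a / (2 * n + 1) - b / (2 * n + 3)) * r ^ (2 * n + 2))
      ((a * r ^ 2 - b) * (artanh r / r) + b) := by
  have hsum := hasSum_artanh_div_self h0 hr
  have htail : HasSum (fun n : ℕ => r ^ (2 * n + 2) / (2 * n + 3)) (artanh r / r - 1) := by
    have hshift := (hasSum_nat_add_iff' 1).2 hsum
    norm_num only [Finset.sum_range_one, mul_zero, pow_zero, Nat.cast_zero] at hshift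
    refine hshift.congr_fun fun n => ?_
    push_cast
    ring
  have hvalue : (a * r ^ 2 - b) * (artanh r / r) + b =
      a * r ^ 2 * (artanh r / r) - b * (artanh r / r - 1) := by ring
  rw [hvalue]
  refine ((hsum.mul_left (a * r ^ 2)).sub (htail.mul_left b)).congr_fun fun n => ?_
  ring

lemma strictMonoOn_mul_sq_sub_mul_artanh_div_self {a b : ℝ} (ha : 0 < a) (hba : b ≤ a) :
    StrictMonoOn (fun r => (a * r ^ 2 - b) * (artanh r / r)) (Set.Ioo 0 1) := by
  have hcoeff (n : ℕ) : 0 < a / (2 * n + 1) - b / (2 * n + 3) := by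
    refine sub_pos.2 ?_
    calc b / (2 * n + 3) ≤ a / (2 * n + 3) := by gcongr
      _ < a / (2 * n + 1) := by gcongr; norm_num
  have hasSum_of_mem {r : ℝ} (hr : r ∈ Set.Ioo 0 1) :=
    hasSum_mul_sq_sub_mul_artanh_div_self a b hr.1.ne' (abs_lt.2 ⟨by linarith [hr.1], hr.2⟩)
  intro r hr s hs hrs
  have hterm (n : ℕ) : (a / (2 * n + 1) - b / (2 * n + 3)) * r ^ (2 * n + 2) <
      (a / (2 * n + 1) - b / (2 * n + 3)) * s ^ (2 * n + 2) :=
    mul_lt_mul_of_pos_left (pow_lt_pow_left₀ hrs hr.1.le (by lia)) (hcoeff n)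
  exact lt_of_add_lt_add_right
    (hasSum_lt (fun n => (hterm n).le) (hterm 0) (hasSum_of_mem hr) (hasSum_of_mem hs))

lemma mul_sq_add_mul_sub_le {a w : ℝ} (ha : a < 1) (hw : w ^ 2 ≤ 4 * a * (1 - a)) (z : ℝ) :
    a * z ^ 2 + z * (w - z) ≤ a := by
  have hsquare : 4 * (1 - a) * (a - (a * z ^ 2 + z * (w - z))) =
      (4 * a * (1 - a) - w ^ 2) + (w - 2 * (1 - a) * z) ^ 2 := by ring
  refine sub_nonneg.1 (nonneg_of_mul_nonneg_right (a := 4 * (1 - a)) ?_ (by linarith))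
  rw [hsquare]
  exact add_nonneg (sub_nonneg.2 hw) (sq_nonneg _)

lemma strictMonoOn_sqrt_sq_add {c : ℝ} (hc : 0 ≤ c) :
    StrictMonoOn (fun x => Real.sqrt (x ^ 2 + c)) (Set.Ici 0) := by
  intro x hx y _ hxy
  have hsq : x ^ 2 < y ^ 2 := pow_lt_pow_left₀ hxy hx two_ne_zero
  exact Real.sqrt_lt_sqrt (by positivity) (by linarith)

theorem marginal_entropy_production_strictMono_general
    {zinf : ℝ} (h0 : zinf ≠ 0) (h1 : |zinf| < 1) (z : ℝ) :
    StrictMonoOn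
      (fun ℓ : ℝ =>
        (1 - Real.sqrt (1 - zinf ^ 2)) / 2 *
            (ℓ ^ 2 / Real.sqrt (ℓ ^ 2 + z ^ 2)) * artanh (Real.sqrt (ℓ ^ 2 + z ^ 2))
          + (zinf - z) *
            (artanh zinf - z / Real.sqrt (ℓ ^ 2 + z ^ 2) * artanh (Real.sqrt (ℓ ^ 2 + z ^ 2))))
      {ℓ | 0 < ℓ ∧ ℓ ^ 2 + z ^ 2 < 1} := by
  have hsqrt_nonneg := Real.sqrt_nonneg (1 - zinf ^ 2)
  have hsqrt_sq := Real.sq_sqrt (sub_nonneg.2 ((sq_lt_one_iff_abs_lt_one zinf).2 h1).le)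
  have hsqrt_lt : Real.sqrt (1 - zinf ^ 2) < 1 :=
    (Real.sqrt_lt' one_pos).2 (by linarith [sq_pos_of_ne_zero h0])
  set a := (1 - Real.sqrt (1 - zinf ^ 2)) / 2 with ha
  have hba : a * z ^ 2 + z * (zinf - z) ≤ a :=
    mul_sq_add_mul_sub_le (by linarith) (by rw [ha]; linarith) z
  have hr : Set.MapsTo (fun ℓ => Real.sqrt (ℓ ^ 2 + z ^ 2))
      {ℓ | 0 < ℓ ∧ ℓ ^ 2 + z ^ 2 < 1} (Set.Ioo 0 1) := fun ℓ ⟨hℓ, hlt⟩ =>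
    ⟨Real.sqrt_pos.2 (by positivity), (Real.sqrt_lt' one_pos).2 (by linarith)⟩
  have hmono := (strictMonoOn_mul_sq_sub_mul_artanh_div_self (by linarith) hba).comp
    ((strictMonoOn_sqrt_sq_add (sq_nonneg z)).mono fun ℓ hℓ => hℓ.1.le) hr
  refine (hmono.add_const ((zinf - z) * artanh zinf)).congr fun ℓ _ => ?_
  simp only [Function.comp_apply, Real.sq_sqrt (show 0 ≤ ℓ ^ 2 + z ^ 2 by positivity)]
  ring

/-- The marginal entropy production s_m is strictly increasing in ℓ along any
horizontal slice of the Bloch ball. -/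
theorem marginal_entropy_production_strictMono
    (zinf : ℝ) (h1 : 0 < zinf) (h2 : zinf < 1) (z : ℝ) (hz0 : 0 ≤ z) (hz : z ≤ zinf) :
    StrictMonoOn
      (fun ℓ : ℝ =>
        (1 - Real.sqrt (1 - zinf ^ 2)) / 2 *
            (ℓ ^ 2 / Real.sqrt (ℓ ^ 2 + z ^ 2)) * artanh (Real.sqrt (ℓ ^ 2 + z ^ 2))
          + (zinf - z) *
            (artanh zinf - z / Real.sqrt (ℓ ^ 2 + z ^ 2) * artanh (Real.sqrt (ℓ ^ 2 + z ^ 2))))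
      (Set.Ioo 0 (Real.sqrt (1 - z ^ 2))) :=
  (marginal_entropy_production_strictMono_general h1.ne' (by rwa [abs_of_pos h1]) z).mono
    fun _ hℓ => ⟨hℓ.1, lt_sub_iff_add_lt.1 ((Real.lt_sqrt hℓ.1.le).1 hℓ.2)⟩
end

section
/- Let z∞ ∈ [0,1), Γ, γ₊ ∈ ℝ, and fix z ∈ (−1,1) such that −Γ·(1 − z²) + γ₊·(z∞ − z)·z > 0 (i.e. the radial velocity ṙ at the pure-state boundary r = 1 is positive at height z). Then σ(ℓ,z) tends to −∞ as ℓ tends to √(1 − z²) from below. (This shows that failure of P-divisibility produces arbitrarily negative entropy production near the boundary of the Bloch ball.) -/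
/-!
In polar form the entropy production is `σ = -ṙ · artanh r + ż · artanh z∞`. As a point of the Bloch
disc approaches the boundary circle `r = 1`, `artanh r` has a logarithmic singularity, while `ṙ`
and `ż` stay continuous. If `ṙ` is positive at the boundary point, the first summand therefore
diverges to `-∞` and the second one converges, whichever way the boundary point is approached;
the theorem is the approach along a horizontal chord `z = const`.
-/

open Filter Topology

lemma tendsto_artanh_nhdsLT_one : Tendsto artanh (𝓝[<] 1) atTop := by
  have hden : Tendsto (fun r : ℝ => 1 - r) (𝓝[<] 1) (𝓝[>] 0) := by
    have hcont : ContinuousWithinAt (fun r : ℝ => 1 - r) (Set.Iio 1) 1 := by fun_prop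
    have hmaps : Set.MapsTo (fun r : ℝ => 1 - r) (Set.Iio 1) (Set.Ioi 0) :=
      fun r hr => Set.mem_Ioi.2 (sub_pos.2 (Set.mem_Iio.1 hr))
    simpa only [sub_self] using hcont.tendsto_nhdsWithin hmaps
  have hnum : Tendsto (fun r : ℝ => 1 + r) (𝓝[<] 1) (𝓝 (1 + 1)) :=
    (continuous_const.add continuous_id).continuousWithinAt
  have hquot : Tendsto (fun r : ℝ => (1 + r) / (1 - r)) (𝓝[<] 1) atTop :=
    hnum.pos_mul_atTop (by norm_num) hden.inv_tendsto_nhdsGT_zero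
  exact (Real.tendsto_log_atTop.comp hquot).const_mul_atTop (by norm_num)

lemma mul_F_eq_artanh (r : ℝ) : r * F r = artanh r := by
  by_cases hr : r = 0
  · simp [hr, artanh]
  · rw [F, if_neg hr, mul_div_cancel₀ _ hr]

/-- The Bloch radius `r` of a qubit state with transverse coordinate `ℓ` and height `z`. -/
noncomputable def blochRadius (ℓ z : ℝ) : ℝ := Real.sqrt (ℓ ^ 2 + z ^ 2)

/-- The mixed states in `(ℓ, z)` coordinates: the open unit disc. The coordinate `ℓ` may have
either sign, so that this is a full section of the Bloch ball through its axis. -/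
def blochDisc : Set (ℝ × ℝ) := {p | blochRadius p.1 p.2 < 1}

/-- The longitudinal velocity `ż` of the phase-covariant dynamics. -/
def longitudinalVelocity (γp zinf z : ℝ) : ℝ := γp * (zinf - z)

/-- The radial velocity `ṙ` of the phase-covariant dynamics. At the centre of the Bloch ball, where
`ṙ` is undefined, division by zero gives it the value `0`. -/
noncomputable def radialVelocity (Γ γp zinf ℓ z : ℝ) : ℝ :=
  (-Γ * ℓ ^ 2 + longitudinalVelocity γp zinf z * z) / blochRadius ℓ z

lemma continuous_blochRadius : Continuous fun p : ℝ × ℝ => blochRadius p.1 p.2 := by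
  unfold blochRadius
  fun_prop

lemma blochRadius_eq_zero_iff {ℓ z : ℝ} : blochRadius ℓ z = 0 ↔ ℓ = 0 ∧ z = 0 := by
  rw [blochRadius, Real.sqrt_eq_zero (by positivity),
    add_eq_zero_iff_of_nonneg (sq_nonneg ℓ) (sq_nonneg z), sq_eq_zero_iff, sq_eq_zero_iff]

lemma blochRadius_lt_blochRadius {ℓ₁ ℓ₂ : ℝ} (h : |ℓ₁| < |ℓ₂|) (z : ℝ) :
    blochRadius ℓ₁ z < blochRadius ℓ₂ z :=
  Real.sqrt_lt_sqrt (by positivity) (add_lt_add_left (sq_lt_sq.2 h) _)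

lemma blochRadius_sqrt_one_sub_sq {z : ℝ} (hz : z ^ 2 ≤ 1) :
    blochRadius (Real.sqrt (1 - z ^ 2)) z = 1 := by
  rw [blochRadius, Real.sq_sqrt (sub_nonneg.2 hz), sub_add_cancel, Real.sqrt_one]

lemma radialVelocity_mul_blochRadius (Γ γp zinf ℓ z : ℝ) :
    radialVelocity Γ γp zinf ℓ z * blochRadius ℓ z =
      -Γ * ℓ ^ 2 + longitudinalVelocity γp zinf z * z := by
  by_cases hr : blochRadius ℓ z = 0
  · obtain ⟨rfl, rfl⟩ := blochRadius_eq_zero_iff.1 hr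
    simp [hr]
  · exact div_mul_cancel₀ _ hr

lemma continuousAt_radialVelocity (Γ γp zinf : ℝ) {ℓ z : ℝ} (hr : blochRadius ℓ z ≠ 0) :
    ContinuousAt (fun p : ℝ × ℝ => radialVelocity Γ γp zinf p.1 p.2) (ℓ, z) := by
  refine ContinuousAt.div ?_ continuous_blochRadius.continuousAt hr
  unfold longitudinalVelocity
  fun_prop

lemma sigmaFP_eq_radialVelocity (Γ γp zinf ℓ z : ℝ) :
    sigmaFP Γ γp zinf ℓ z =
      -radialVelocity Γ γp zinf ℓ z * artanh (blochRadius ℓ z) +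
        longitudinalVelocity γp zinf z * artanh zinf := by
  have hrad := radialVelocity_mul_blochRadius Γ γp zinf ℓ z
  calc sigmaFP Γ γp zinf ℓ z
      = -(-Γ * ℓ ^ 2 + longitudinalVelocity γp zinf z * z) * F (blochRadius ℓ z) +
          longitudinalVelocity γp zinf z * artanh zinf := by
        simp only [sigmaFP, longitudinalVelocity, blochRadius]
        ring
    _ = -radialVelocity Γ γp zinf ℓ z * (blochRadius ℓ z * F (blochRadius ℓ z)) +
          longitudinalVelocity γp zinf z * artanh zinf := by
        rw [← hrad]
        ring
    _ = _ := by rw [mul_F_eq_artanh]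

lemma tendsto_blochRadius_nhdsLT_one {ℓ z : ℝ} (hr : blochRadius ℓ z = 1) :
    Tendsto (fun p : ℝ × ℝ => blochRadius p.1 p.2) (𝓝[blochDisc] (ℓ, z)) (𝓝[<] 1) :=
  tendsto_nhdsWithin_iff.2
    ⟨hr ▸ continuous_blochRadius.continuousWithinAt.tendsto, eventually_mem_nhdsWithin⟩

lemma tendsto_prodMk_nhdsWithin_blochDisc {ℓ z : ℝ} (hℓ : 0 < ℓ) (hr : blochRadius ℓ z ≤ 1) :
    Tendsto (fun x : ℝ => (x, z)) (𝓝[<] ℓ) (𝓝[blochDisc] (ℓ, z)) := by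
  refine tendsto_nhdsWithin_iff.2 ⟨ContinuousAt.continuousWithinAt (by fun_prop), ?_⟩
  filter_upwards [Ioo_mem_nhdsLT (neg_lt_self hℓ)] with x hx
  have habs : |x| < |ℓ| := abs_lt.2 (by rwa [abs_of_pos hℓ])
  exact (blochRadius_lt_blochRadius habs z).trans_le hr

theorem sigmaFP_tendsto_atBot_of_not_P_divisible_general
    (Γ γp : ℝ) {zinf ℓ z : ℝ} (_hzinf : zinf ∈ Set.Ioo (-1) 1)
    (hr : blochRadius ℓ z = 1) (hpos : 0 < radialVelocity Γ γp zinf ℓ z) :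
    Tendsto (fun p : ℝ × ℝ => sigmaFP Γ γp zinf p.1 p.2) (𝓝[blochDisc] (ℓ, z)) atBot := by
  have hradial : Tendsto (fun p : ℝ × ℝ => -radialVelocity Γ γp zinf p.1 p.2)
      (𝓝[blochDisc] (ℓ, z)) (𝓝 (-radialVelocity Γ γp zinf ℓ z)) :=
    (continuousAt_radialVelocity Γ γp zinf (hr.trans_ne one_ne_zero)).neg.continuousWithinAt
  have hartanh : Tendsto (fun p : ℝ × ℝ => artanh (blochRadius p.1 p.2))
      (𝓝[blochDisc] (ℓ, z)) atTop :=
    tendsto_artanh_nhdsLT_one.comp (tendsto_blochRadius_nhdsLT_one hr)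
  have hlong : Tendsto (fun p : ℝ × ℝ => longitudinalVelocity γp zinf p.2 * artanh zinf)
      (𝓝[blochDisc] (ℓ, z)) (𝓝 (longitudinalVelocity γp zinf z * artanh zinf)) := by
    unfold longitudinalVelocity
    exact ContinuousAt.continuousWithinAt (by fun_prop)
  simp only [sigmaFP_eq_radialVelocity]
  exact (hradial.neg_mul_atTop (neg_lt_zero.2 hpos) hartanh).atBot_add hlong

/-- If the radial velocity at the pure-state boundary is positive at height z, then
the entropy production tends to −∞ as ℓ approaches √(1 − z²) from below. -/
theorem sigmaFP_tendsto_atBot_of_not_P_divisible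
    (zinf Γ γp : ℝ) (hz0 : 0 ≤ zinf) (hz1 : zinf < 1)
    (z : ℝ) (hzm : -1 < z) (hzp : z < 1)
    (hpos : 0 < -Γ * (1 - z ^ 2) + γp * (zinf - z) * z) :
    Filter.Tendsto (fun ℓ : ℝ => sigmaFP Γ γp zinf ℓ z)
      (nhdsWithin (Real.sqrt (1 - z ^ 2)) (Set.Iio (Real.sqrt (1 - z ^ 2))))
      Filter.atBot := by
  have hz : 0 < 1 - z ^ 2 := sub_pos.2 ((sq_lt_one_iff_abs_lt_one z).2 (abs_lt.2 ⟨hzm, hzp⟩))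
  have hr := blochRadius_sqrt_one_sub_sq (sub_pos.1 hz).le
  have hvel : 0 < radialVelocity Γ γp zinf (Real.sqrt (1 - z ^ 2)) z := by
    rwa [radialVelocity, hr, div_one, Real.sq_sqrt hz.le, longitudinalVelocity]
  have hzinf : zinf ∈ Set.Ioo (-1) 1 := ⟨neg_one_lt_zero.trans_le hz0, hz1⟩
  have hchord := tendsto_prodMk_nhdsWithin_blochDisc (Real.sqrt_pos.2 hz) hr.le
  have hdisc := sigmaFP_tendsto_atBot_of_not_P_divisible_general Γ γp hzinf hr hvel
  simpa only [Function.comp_def] using hdisc.comp hchord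
end
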